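/- Let u be a pair potential that is stable with constant B ≥ 0 and regular, let Λ ⊂ ℝ^d be bounded and measurable, and assume Ξ_Λ(z) ≠ 0 for all |z| < z₀. Let z ∈ ℂ with |z| < z₀, let k ≥ 0 and y_1,…,y_k ∈ Λ with θ_Λ^{(k)}(z; y_1,…,y_k) ≠ 0 (θ_Λ^{(0)} := 1). Then for all n ≥ 1 and x_1,…,x_n ∈ Λ the quotients satisfy the Kirkwood–Salsburg-type recursion: θ_Λ^{(n+k)}(z; x_1,…,x_n, y_1,…,y_k) / θ_Λ^{(k)}(z; y_1,…,y_k) = z e^{−β W({x_1} | {x_2,…,x_n} ∪ {y_1,…,y_k})} Σ_{l=0}^∞ (1/l!) ∫_{Λ^l} Π_{i=1}^l f_β(x_1 − w_i) · [ θ_Λ^{(n+k+l−1)}(z; x_2,…,x_n, y_1,…,y_k, w_1,…,w_l) / θ_Λ^{(k)}(z; y_1,…,y_k) ] dw_1⋯dw_l, the series converging absolutely. -/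

import Mathlib

open MeasureTheory Bornology

noncomputable section

/-- Boltzmann factor `e^{-β t}` with the convention `e^{-β(+∞)} = 0`. -/
def boltz (β : ℝ) (t : EReal) : ℝ :=
  if t = ⊤ then 0 else Real.exp (-β * t.toReal)

/-- Hamiltonian of a pair potential: `H(x₁,…,xₙ) = ∑_{i<j} u(xᵢ - xⱼ)`. -/
def Ham {d : ℕ} (u : (Fin d → ℝ) → EReal) (n : ℕ) (x : Fin n → (Fin d → ℝ)) : EReal :=
  ∑ p ∈ Finset.univ.filter (fun p : Fin n × Fin n => p.1 < p.2), u (x p.1 - x p.2)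

/-- A pair potential: even, measurable, bounded from below. -/
def IsPairPotential {d : ℕ} (u : (Fin d → ℝ) → EReal) : Prop :=
  Measurable u ∧ (∀ x, u (-x) = u x) ∧ ∃ m : ℝ, ∀ x, (m : EReal) ≤ u x

/-- Stability with constant `B`: `H(x₁,…,xₙ) ≥ -Bn`. -/
def IsStable {d : ℕ} (u : (Fin d → ℝ) → EReal) (B : ℝ) : Prop :=
  ∀ (n : ℕ) (x : Fin n → (Fin d → ℝ)), ((-(B * n) : ℝ) : EReal) ≤ Ham u n x

/-- Mayer function `f_β = e^{-βu} - 1`. -/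
def mayer {d : ℕ} (β : ℝ) (u : (Fin d → ℝ) → EReal) (x : Fin d → ℝ) : ℝ :=
  boltz β (u x) - 1

/-- Regularity: the Mayer function is integrable. -/
def IsRegularPP {d : ℕ} (β : ℝ) (u : (Fin d → ℝ) → EReal) : Prop :=
  Integrable (mayer β u)

/-- `C_β(u) = ∫ |e^{-βu} - 1|`. -/
def Creg {d : ℕ} (β : ℝ) (u : (Fin d → ℝ) → EReal) : ℝ :=
  ∫ x, |mayer β u x|

/-- The cartesian power `Λ^k`. -/
def cube {d : ℕ} (Λ : Set (Fin d → ℝ)) (k : ℕ) : Set (Fin k → (Fin d → ℝ)) :=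
  Set.univ.pi fun _ => Λ

/-- Grand canonical partition function `Ξ_Λ(z)`. -/
def Xi {d : ℕ} (β : ℝ) (u : (Fin d → ℝ) → EReal) (Λ : Set (Fin d → ℝ)) (z : ℂ) : ℂ :=
  ∑' k : ℕ, z ^ k / (Nat.factorial k : ℂ) *
    ((∫ y in cube Λ k, boltz β (Ham u k y) : ℝ) : ℂ)

/-- `θ_Λ^{(n)}(z; x₁,…,xₙ)`. -/
def theta {d : ℕ} (β : ℝ) (u : (Fin d → ℝ) → EReal) (Λ : Set (Fin d → ℝ)) (n : ℕ)
    (z : ℂ) (x : Fin n → (Fin d → ℝ)) : ℂ :=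
  (Xi β u Λ z)⁻¹ * ∑' k : ℕ, z ^ (n + k) / (Nat.factorial k : ℂ) *
    ((∫ y in cube Λ k, boltz β (Ham u (n + k) (Fin.append x y)) : ℝ) : ℂ)

end

noncomputable section KSaux

/-- Product of pair interactions over unordered pairs, index-order free. -/
def KG {E : Type*} (φ : E → E → ℝ) (ι : Type*) [Fintype ι] (x : ι → E) : ℝ :=
  open Classical in
  Real.sqrt (∏ p : ι × ι, if p.1 = p.2 then 1 else φ (x p.1) (x p.2))

lemma KG_comp {E : Type*} (φ : E → E → ℝ) {ι κ : Type*} [Fintype ι] [Fintype κ] (e : ι ≃ κ)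
    (x : κ → E) : KG φ ι (x ∘ e) = KG φ κ x := by
  classical
  unfold KG
  congr 1
  refine Fintype.prod_equiv (e.prodCongr e) _ _ ?_
  intro p
  simp

lemma KG_nonneg {E : Type*} (φ : E → E → ℝ) {ι : Type*} [Fintype ι] (x : ι → E) :
    0 ≤ KG φ ι x := Real.sqrt_nonneg _

lemma KG_option {E : Type*} (φ : E → E → ℝ) (hs : ∀ a b, φ a b = φ b a) (h0 : ∀ a b, 0 ≤ φ a b)
    {ι : Type*} [Fintype ι] (x : Option ι → E) :
    KG φ (Option ι) x = (∏ i, φ (x none) (x (some i))) * KG φ ι (fun i => x (some i)) := by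
  classical
  unfold KG
  have hP : 0 ≤ ∏ i, φ (x none) (x (some i)) := Finset.prod_nonneg fun i _ => h0 _ _
  rw [← Real.sqrt_sq hP, ← Real.sqrt_mul (sq_nonneg _)]
  congr 1
  rw [Fintype.prod_prod_type, Fintype.prod_option, Fintype.prod_option]
  simp only [Fintype.prod_option, Finset.prod_mul_distrib, Fintype.prod_prod_type]
  simp only [reduceCtorEq, if_false, if_true, Option.some.injEq]
  simp only [hs _ (x none)]
  ring

lemma KG_fin {E : Type*} (φ : E → E → ℝ) (hs : ∀ a b, φ a b = φ b a) (h0 : ∀ a b, 0 ≤ φ a b)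
    {n : ℕ} (x : Fin n → E) :
    KG φ (Fin n) x =
      ∏ p ∈ Finset.univ.filter (fun p : Fin n × Fin n => p.1 < p.2), φ (x p.1) (x p.2) := by
  classical
  unfold KG
  have hP : 0 ≤ ∏ p ∈ Finset.univ.filter (fun p : Fin n × Fin n => p.1 < p.2),
      φ (x p.1) (x p.2) := Finset.prod_nonneg fun i _ => h0 _ _
  rw [← Real.sqrt_sq hP]
  congr 1
  have h2 : ∏ p ∈ Finset.univ.filter (fun p : Fin n × Fin n => p.1 < p.2), φ (x p.1) (x p.2)
      = ∏ p ∈ Finset.univ.filter (fun p : Fin n × Fin n => p.2 < p.1), φ (x p.1) (x p.2) := by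
    refine Finset.prod_equiv (Equiv.prodComm _ _) ?_ ?_
    · intro p; simp
    · intro p _; simp [hs (x p.1)]
  rw [sq]
  nth_rewrite 2 [h2]
  rw [Finset.prod_filter, Finset.prod_filter, ← Finset.prod_mul_distrib]
  refine Finset.prod_congr rfl fun p _ => ?_
  rcases lt_trichotomy p.1 p.2 with h | h | h
  · simp [h, h.ne, not_lt.2 h.le]
  · simp [h]
  · simp [h, h.ne', not_lt.2 h.le]

lemma KG_measurable {E : Type*} [MeasurableSpace E] (φ : E → E → ℝ)
    (hm : Measurable (fun p : E × E => φ p.1 p.2)) {ι : Type*} [Fintype ι] :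
    Measurable (KG φ ι) := by
  classical
  unfold KG
  refine Measurable.sqrt (Finset.measurable_prod _ fun p _ => ?_)
  split_ifs
  · exact measurable_const
  · have h : Measurable (fun x : ι → E => (x p.1, x p.2)) := by fun_prop
    exact hm.comp h

variable {E : Type*} [MeasurableSpace E]

lemma KG_meas_elim (φ : E → E → ℝ)
    (hm : Measurable (fun p : E × E => φ p.1 p.2)) {A ι Ω : Type*} [Fintype A] [Fintype ι]
    [MeasurableSpace Ω] (f : Ω → A → E) (g : Ω → ι → E) (hf : Measurable f) (hg : Measurable g) :
    Measurable (fun o => KG φ (A ⊕ ι) (Sum.elim (f o) (g o))) := by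
  refine (KG_measurable φ hm).comp (measurable_pi_lambda _ ?_)
  rintro (a | i)
  · exact (measurable_pi_apply a).comp hf
  · exact (measurable_pi_apply i).comp hg

/-- pull back an integral along a relabelling of a set and its complement. -/
lemma pi_split (μ : Measure E) [IsFiniteMeasure μ] {j l r : ℕ} (e : Fin l ⊕ Fin r ≃ Fin j)
    (F : (Fin j → E) → ℝ) :
    ∫ v, F v ∂(Measure.pi fun _ : Fin j => μ) =
      ∫ q, F (Sum.elim q.1 q.2 ∘ e.symm)
        ∂((Measure.pi fun _ : Fin l => μ).prod (Measure.pi fun _ : Fin r => μ)) := by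
  have h1 := measurePreserving_piCongrLeft (fun _ : Fin j => μ) e
  have h2 := measurePreserving_sumPiEquivProdPi_symm (fun _ : Fin l ⊕ Fin r => μ)
  rw [← h1.integral_comp', ← h2.integral_comp']
  refine integral_congr_ae (Filter.Eventually.of_forall fun q => ?_)
  dsimp only
  congr 1
  funext i
  obtain ⟨s, rfl⟩ := e.surjective i
  rw [MeasurableEquiv.coe_piCongrLeft, Equiv.piCongrLeft_apply_apply]
  rcases s with s | s <;> simp [MeasurableEquiv.coe_sumPiEquivProdPi_symm]

/-- The integral over the last `r` variables. -/
def KJ (φ : E → E → ℝ) (μ : Measure E) (ι : Type*) [Fintype ι] (r : ℕ) (x : ι → E) : ℝ :=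
  ∫ v, KG φ (ι ⊕ Fin r) (Sum.elim x v) ∂(Measure.pi fun _ : Fin r => μ)

/-- Unnormalised correlation function. -/
def KS (φ : E → E → ℝ) (μ : Measure E) (ι : Type*) [Fintype ι] (N : ℕ) (z : ℂ) (x : ι → E) : ℂ :=
  ∑' r : ℕ, z ^ (N + r) / (Nat.factorial r : ℂ) * ((KJ φ μ ι r x : ℝ) : ℂ)

/-- The integrals of Mayer products against correlation integrands. -/
def KI (φ : E → E → ℝ) (μ : Measure E) (h : E → ℝ) {A : Type*} [Fintype A] (X : A → E)
    (l r : ℕ) : ℝ :=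
  ∫ w, (∏ i, h (w i)) * KJ φ μ (A ⊕ Fin l) r (Sum.elim X w) ∂(Measure.pi fun _ : Fin l => μ)

lemma KG_le {E : Type*} (φ : E → E → ℝ) (K : ℝ)
    (hK : ∀ (n : ℕ) (x : Fin n → E), KG φ (Fin n) x ≤ K ^ n)
    {ι : Type*} [Fintype ι] (x : ι → E) : KG φ ι x ≤ K ^ Fintype.card ι := by
  rw [← KG_comp φ (Fintype.equivFin ι).symm x]
  exact hK _ _

lemma KJ_nonneg (φ : E → E → ℝ) (μ : Measure E) {ι : Type*} [Fintype ι] (r : ℕ) (x : ι → E) : 0 ≤ KJ φ μ ι r x :=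
  integral_nonneg fun _ => KG_nonneg _ _

lemma KJ_le (φ : E → E → ℝ) (K : ℝ)
    (hK : ∀ (n : ℕ) (x : Fin n → E), KG φ (Fin n) x ≤ K ^ n)
    (μ : Measure E) [IsFiniteMeasure μ] {ι : Type*} [Fintype ι] (r : ℕ) (x : ι → E) :
    KJ φ μ ι r x ≤ K ^ (Fintype.card ι + r) * μ.real Set.univ ^ r := by
  have := norm_integral_le_of_norm_le_const (μ := Measure.pi fun _ : Fin r => μ)
    (f := fun v => KG φ (ι ⊕ Fin r) (Sum.elim x v)) (C := K ^ (Fintype.card ι + r))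
    (Filter.Eventually.of_forall fun v => by
      rw [Real.norm_of_nonneg (KG_nonneg _ _)]
      simpa using KG_le φ K hK (Sum.elim x v))
  refine (le_trans (le_abs_self _) this).trans (le_of_eq ?_)
  congr 1
  simp [measureReal_def, Measure.pi_univ]

lemma KI_integrable_prod (φ : E → E → ℝ) (hm : Measurable (fun p : E × E => φ p.1 p.2)) (K : ℝ)
    (hK : ∀ (n : ℕ) (x : Fin n → E), KG φ (Fin n) x ≤ K ^ n)
    (μ : Measure E) [IsFiniteMeasure μ] (h : E → ℝ) (hh : Integrable h μ) {A : Type*} [Fintype A] (X : A → E)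
    (l r : ℕ) :
    Integrable (fun q : (Fin l → E) × (Fin r → E) => (∏ i, h (q.1 i)) *
      KG φ ((A ⊕ Fin l) ⊕ Fin r) (Sum.elim (Sum.elim X q.1) q.2))
      ((Measure.pi fun _ : Fin l => μ).prod (Measure.pi fun _ : Fin r => μ)) := by
  have h1 : Integrable (fun w : Fin l → E => ∏ i, h (w i)) (Measure.pi fun _ : Fin l => μ) :=
    Integrable.fintype_prod (fun _ => hh)
  refine Integrable.mul_bdd (c := K ^ (Fintype.card A + l + r)) (h1.comp_fst _) ?_ ?_
  · refine (KG_meas_elim φ hm _ _ ?_ measurable_snd).aestronglyMeasurable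
    refine measurable_pi_lambda _ ?_
    rintro (a | i)
    · exact measurable_const
    · exact (measurable_pi_apply i).comp measurable_fst
  · refine Filter.Eventually.of_forall fun v => ?_
    rw [Real.norm_of_nonneg (KG_nonneg _ _)]
    simpa using KG_le φ K hK (Sum.elim (Sum.elim X v.1) v.2)

lemma KI_integrable (φ : E → E → ℝ) (hm : Measurable (fun p : E × E => φ p.1 p.2)) (K : ℝ)
    (hK : ∀ (n : ℕ) (x : Fin n → E), KG φ (Fin n) x ≤ K ^ n)
    (μ : Measure E) [IsFiniteMeasure μ] (h : E → ℝ) (hh : Integrable h μ) {A : Type*} [Fintype A] (X : A → E)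
    (l r : ℕ) :
    Integrable (fun w : Fin l → E => (∏ i, h (w i)) * KJ φ μ (A ⊕ Fin l) r (Sum.elim X w))
      (Measure.pi fun _ : Fin l => μ) := by
  have := (KI_integrable_prod φ hm K hK μ h hh X l r).integral_prod_left
  refine this.congr (Filter.Eventually.of_forall fun w => ?_)
  simp only [KJ, integral_const_mul]

lemma KI_eq_prod (φ : E → E → ℝ) (hm : Measurable (fun p : E × E => φ p.1 p.2)) (K : ℝ)
    (hK : ∀ (n : ℕ) (x : Fin n → E), KG φ (Fin n) x ≤ K ^ n)
    (μ : Measure E) [IsFiniteMeasure μ] (h : E → ℝ) (hh : Integrable h μ) {A : Type*} [Fintype A] (X : A → E)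
    (l r : ℕ) :
    KI φ μ h X l r = ∫ q : (Fin l → E) × (Fin r → E), (∏ i, h (q.1 i)) *
      KG φ ((A ⊕ Fin l) ⊕ Fin r) (Sum.elim (Sum.elim X q.1) q.2)
      ∂((Measure.pi fun _ : Fin l => μ).prod (Measure.pi fun _ : Fin r => μ)) := by
  rw [integral_prod _ (KI_integrable_prod φ hm K hK μ h hh X l r)]
  simp only [KI, KJ, integral_const_mul]

lemma KI_norm_le (φ : E → E → ℝ) (hm : Measurable (fun p : E × E => φ p.1 p.2)) (K : ℝ)
    (hK : ∀ (n : ℕ) (x : Fin n → E), KG φ (Fin n) x ≤ K ^ n)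
    (μ : Measure E) [IsFiniteMeasure μ] (h : E → ℝ) (hh : Integrable h μ) {A : Type*} [Fintype A] (X : A → E)
    (l r : ℕ) :
    ∫ w : Fin l → E, ‖(∏ i, h (w i)) * KJ φ μ (A ⊕ Fin l) r (Sum.elim X w)‖
      ∂(Measure.pi fun _ : Fin l => μ) ≤
    (∫ a, |h a| ∂μ) ^ l * (K ^ (Fintype.card A + l + r) * μ.real Set.univ ^ r) := by
  have h1 : Integrable (fun w : Fin l → E => ∏ i, |h (w i)|) (Measure.pi fun _ : Fin l => μ) :=
    Integrable.fintype_prod (fun _ => hh.abs)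
  have h2 := integral_fintype_prod_eq_pow (ι := Fin l) (μ := μ) (fun a => |h a|)
  rw [Fintype.card_fin] at h2
  rw [← h2, ← integral_mul_const]
  refine integral_mono (KI_integrable φ hm K hK μ h hh X l r).norm (h1.mul_const _) fun w => ?_
  dsimp only
  rw [norm_mul, Real.norm_eq_abs, Finset.abs_prod]
  refine mul_le_mul_of_nonneg_left ?_ (Finset.prod_nonneg fun _ _ => abs_nonneg _)
  rw [Real.norm_of_nonneg (KJ_nonneg _ _ _ _)]
  simpa using KJ_le φ K hK μ r (Sum.elim X w)

lemma KI_expand (φ : E → E → ℝ) (hm : Measurable (fun p : E × E => φ p.1 p.2)) (K : ℝ)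
    (hK : ∀ (n : ℕ) (x : Fin n → E), KG φ (Fin n) x ≤ K ^ n)
    (μ : Measure E) [IsFiniteMeasure μ] (h : E → ℝ) (hh : Integrable h μ) {A : Type*} [Fintype A] (X : A → E)
    (j : ℕ) :
    ∫ v, (∏ i, (1 + h (v i))) * KG φ (A ⊕ Fin j) (Sum.elim X v) ∂(Measure.pi fun _ : Fin j => μ) =
      ∑ l ∈ Finset.range (j + 1), (j.choose l : ℝ) * KI φ μ h X l (j - l) := by
  have key : ∀ S : Finset (Fin j),
      Integrable (fun v : Fin j → E => (∏ i ∈ S, h (v i)) * KG φ (A ⊕ Fin j) (Sum.elim X v))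
        (Measure.pi fun _ : Fin j => μ) ∧
      ∫ v, (∏ i ∈ S, h (v i)) * KG φ (A ⊕ Fin j) (Sum.elim X v) ∂(Measure.pi fun _ : Fin j => μ)
        = KI φ μ h X S.card (j - S.card) := by
    intro S
    constructor
    · have h1 : Integrable (fun v : Fin j → E => ∏ i ∈ S, h (v i))
          (Measure.pi fun _ : Fin j => μ) := by
        have := Integrable.fintype_prod (ι := Fin j) (μ := fun _ => μ)
          (f := fun i a => if i ∈ S then h a else 1)
          (fun i => by
            by_cases hi : i ∈ S
            · simpa [hi] using hh
            · simp [hi])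
        simpa [Finset.prod_ite_mem] using this
      refine Integrable.mul_bdd (c := K ^ (Fintype.card A + j)) h1 ?_ ?_
      · exact (KG_meas_elim φ hm _ _ measurable_const measurable_id).aestronglyMeasurable
      · refine Filter.Eventually.of_forall fun v => ?_
        rw [Real.norm_of_nonneg (KG_nonneg _ _)]
        simpa using KG_le φ K hK (Sum.elim X v)
    · have hc : Sᶜ.card = j - S.card := by simp [Finset.card_compl]
      set e := finSumEquivOfFinset (s := S) rfl hc with he
      rw [pi_split μ e, KI_eq_prod φ hm K hK μ h hh]
      refine integral_congr_ae (Filter.Eventually.of_forall fun q => ?_)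
      dsimp only
      congr 1
      · have hg : ∀ g : Fin j → ℝ, ∏ i ∈ S, g i = ∏ i, g (S.orderEmbOfFin rfl i) := by
          intro g
          have hS : Finset.univ.map (S.orderEmbOfFin rfl).toEmbedding = S := by simp
          have := Finset.prod_map Finset.univ (S.orderEmbOfFin rfl).toEmbedding g
          rw [hS] at this
          exact this
        rw [hg]
        refine Finset.prod_congr rfl fun i _ => ?_
        have : S.orderEmbOfFin rfl i = e (Sum.inl i) := rfl
        rw [this]
        simp
      · rw [← KG_comp φ ((Equiv.sumAssoc A _ _).trans ((Equiv.refl A).sumCongr e))]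
        congr 1
        funext s
        rcases s with (s | s) | s <;> simp
  simp only [Finset.prod_one_add, Finset.sum_mul]
  rw [integral_finsetSum _ fun S _ => (key S).1]
  simp only [fun S => (key S).2]
  rw [Finset.sum_powerset_apply_card (fun l => KI φ μ h X l (j - l))]
  simp

theorem KS_main (φ : E → E → ℝ) (hm : Measurable (fun p : E × E => φ p.1 p.2)) (K : ℝ)
    (hK : ∀ (n : ℕ) (x : Fin n → E), KG φ (Fin n) x ≤ K ^ n)
    (μ : Measure E) [IsFiniteMeasure μ] (h : E → ℝ) (hh : Integrable h μ) {A : Type*} [Fintype A] (X : A → E)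
    (hK0 : 0 ≤ K) (N : ℕ) (z : ℂ) :
    Summable (fun l : ℕ => ‖(1 / (Nat.factorial l : ℂ)) *
      ∫ w, (∏ i, ((h (w i) : ℝ) : ℂ)) * KS φ μ (A ⊕ Fin l) (N + l) z (Sum.elim X w)
        ∂(Measure.pi fun _ : Fin l => μ)‖) ∧
    ∑' j : ℕ, z ^ (N + 1 + j) / (Nat.factorial j : ℂ) *
      ((∫ v, (∏ i, (1 + h (v i))) * KG φ (A ⊕ Fin j) (Sum.elim X v)
        ∂(Measure.pi fun _ : Fin j => μ) : ℝ) : ℂ) =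
    z * ∑' l : ℕ, (1 / (Nat.factorial l : ℂ)) *
      ∫ w, (∏ i, ((h (w i) : ℝ) : ℂ)) * KS φ μ (A ⊕ Fin l) (N + l) z (Sum.elim X w)
        ∂(Measure.pi fun _ : Fin l => μ) := by
  set C := ∫ a, |h a| ∂μ with hC
  have hC0 : 0 ≤ C := integral_nonneg fun _ => abs_nonneg _
  set M := μ.real Set.univ with hM
  have hM0 : 0 ≤ M := measureReal_nonneg
  set b : ℕ × ℕ → ℝ := fun p => ‖z‖ ^ (N + p.1 + p.2) / (p.1.factorial * p.2.factorial : ℝ) *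
    (C ^ p.1 * (K ^ (Fintype.card A + p.1 + p.2) * M ^ p.2)) with hb
  have hbs : Summable b := by
    have h1 := (Real.summable_pow_div_factorial (‖z‖ * K * C)).mul_of_nonneg
      (Real.summable_pow_div_factorial (‖z‖ * K * M)) (fun _ => by dsimp; positivity)
      (fun _ => by dsimp; positivity)
    refine (h1.mul_left (‖z‖ ^ N * K ^ Fintype.card A)).congr fun p => ?_
    simp only [hb]
    field_simp
    ring
  set F : ℕ × ℕ → ℂ := fun p => z ^ (N + p.1 + p.2) / (p.1.factorial * p.2.factorial : ℂ) *
    ((KI φ μ h X p.1 p.2 : ℝ) : ℂ) with hF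
  have hFb : ∀ p, ‖F p‖ ≤ b p := by
    intro p
    simp only [hF, hb, norm_mul, norm_div, norm_pow, Complex.norm_natCast, Complex.norm_real]
    refine mul_le_mul_of_nonneg_left ?_ (by positivity)
    exact (norm_integral_le_integral_norm _).trans (KI_norm_le φ hm K hK μ h hh X p.1 p.2)
  have hFn : Summable (fun p => ‖F p‖) :=
    hbs.of_nonneg_of_le (fun _ => norm_nonneg _) hFb
  have hFs : Summable F := hFn.of_norm
  have hrow : ∀ l : ℕ, (1 / (Nat.factorial l : ℂ)) *
      ∫ w, (∏ i, ((h (w i) : ℝ) : ℂ)) * KS φ μ (A ⊕ Fin l) (N + l) z (Sum.elim X w)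
        ∂(Measure.pi fun _ : Fin l => μ) = ∑' r, F (l, r) := by
    intro l
    have hs := hasSum_integral_of_summable_integral_norm
      (μ := Measure.pi fun _ : Fin l => μ)
      (F := fun (r : ℕ) (w : Fin l → E) => (z ^ (N + l + r) / (Nat.factorial r : ℂ)) *
        (((∏ i, h (w i)) * KJ φ μ (A ⊕ Fin l) r (Sum.elim X w) : ℝ) : ℂ))
      (fun r => ((KI_integrable φ hm K hK μ h hh X l r).ofReal).const_mul _)
      (by
        refine Summable.of_nonneg_of_le (fun r => integral_nonneg fun _ => norm_nonneg _)
          (fun r => ?_) ((hbs.prod_factor l).mul_left (l.factorial : ℝ))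
        simp only [norm_mul (z ^ _ / _), Complex.norm_real, integral_const_mul]
        refine (mul_le_mul_of_nonneg_left (KI_norm_le φ hm K hK μ h hh X l r)
          (norm_nonneg _)).trans (le_of_eq ?_)
        rw [← hC, ← hM]
        simp only [hb, norm_div, norm_pow, Complex.norm_natCast]
        field_simp)
    have : ∀ w : Fin l → E, (∏ i, ((h (w i) : ℝ) : ℂ)) *
        KS φ μ (A ⊕ Fin l) (N + l) z (Sum.elim X w) =
        ∑' r : ℕ, (z ^ (N + l + r) / (Nat.factorial r : ℂ)) *
        (((∏ i, h (w i)) * KJ φ μ (A ⊕ Fin l) r (Sum.elim X w) : ℝ) : ℂ) := by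
      intro w
      rw [KS, ← tsum_mul_left]
      refine tsum_congr fun r => ?_
      push_cast
      ring
    simp only [this]
    rw [← hs.tsum_eq, ← tsum_mul_left]
    refine tsum_congr fun r => ?_
    rw [integral_const_mul, integral_complex_ofReal]
    simp only [hF, KI]
    have := Nat.factorial_ne_zero l
    have := Nat.factorial_ne_zero r
    field_simp
  simp only [hrow]
  constructor
  · have h1 : Summable (fun l => ∑' r, ‖F (l, r)‖) := hFn.prod
    refine Summable.of_nonneg_of_le (fun _ => norm_nonneg _) (fun l => ?_) h1
    exact norm_tsum_le_tsum_norm (hFn.prod_factor l)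
  · rw [← hFs.tsum_prod, ← tsum_mul_left,
      ← (Finset.HasAntidiagonal.sigmaAntidiagonalEquivProd (A := ℕ)).tsum_eq]
    have hs2 : Summable (fun c : (Σ n : ℕ, Finset.HasAntidiagonal.antidiagonal n) =>
        z * F (Finset.HasAntidiagonal.sigmaAntidiagonalEquivProd c)) :=
      (Finset.HasAntidiagonal.sigmaAntidiagonalEquivProd.summable_iff.2 hFs).mul_left z
    rw [hs2.tsum_sigma' (fun n => (hasSum_fintype _).summable)]
    refine tsum_congr fun j => ?_
    rw [KI_expand φ hm K hK μ h hh X j, tsum_fintype]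
    simp only [Finset.HasAntidiagonal.sigmaAntidiagonalEquivProd_apply]
    rw [Finset.sum_coe_sort (Finset.HasAntidiagonal.antidiagonal j) (fun p : ℕ × ℕ => z * F p),
      Finset.Nat.sum_antidiagonal_eq_sum_range_succ_mk]
    rw [Complex.ofReal_sum, Finset.mul_sum]
    refine Finset.sum_congr rfl fun l hl => ?_
    have hl' : l ≤ j := by simpa [Nat.lt_succ_iff] using hl
    obtain ⟨r, rfl⟩ := Nat.exists_eq_add_of_le hl'
    simp only [hF, Nat.add_sub_cancel_left]
    have h1 := Nat.factorial_ne_zero l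
    have h2 := Nat.factorial_ne_zero r
    have h3 := Nat.factorial_ne_zero (l + r)
    have h4 : ((l + r).choose l : ℂ) * l.factorial * r.factorial = (l + r).factorial := by
      have := Nat.choose_mul_factorial_mul_factorial (Nat.le_add_right l r)
      rw [Nat.add_sub_cancel_left] at this
      exact_mod_cast this
    push_cast
    rw [← h4]
    have h5 : ((l + r).choose l : ℂ) ≠ 0 := by
      have := (Nat.choose_pos (Nat.le_add_right l r)).ne'
      exact_mod_cast this
    field_simp
    ring

end KSaux

lemma boltz_nonneg (β : ℝ) (t : EReal) : 0 ≤ boltz β t := by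
  unfold boltz; split_ifs
  · exact le_rfl
  · exact (Real.exp_pos _).le

lemma boltz_measurable (β : ℝ) : Measurable (boltz β) := by
  unfold boltz
  refine Measurable.ite (measurableSet_singleton _) measurable_const ?_
  exact (measurable_ereal_toReal.const_mul _).exp

lemma boltz_add (β : ℝ) {a b : EReal} (ha : a ≠ ⊥) (hb : b ≠ ⊥) :
    boltz β (a + b) = boltz β a * boltz β b := by
  unfold boltz
  by_cases h1 : a = ⊤
  · simp [h1, EReal.top_add_of_ne_bot hb]
  by_cases h2 : b = ⊤
  · simp [h2, EReal.add_top_of_ne_bot ha]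
  have h3 : a + b ≠ ⊤ := EReal.add_ne_top h1 h2
  rw [if_neg h1, if_neg h2, if_neg h3, EReal.toReal_add h1 ha h2 hb, ← Real.exp_add]
  ring_nf

lemma boltz_sum (β : ℝ) {ι : Type*} (s : Finset ι) (f : ι → EReal) (hf : ∀ i, f i ≠ ⊥) :
    (∑ i ∈ s, f i) ≠ ⊥ ∧ boltz β (∑ i ∈ s, f i) = ∏ i ∈ s, boltz β (f i) := by
  classical
  induction s using Finset.induction_on with
  | empty => simp [boltz]
  | insert a s ha ih =>
    rw [Finset.sum_insert ha, Finset.prod_insert ha, boltz_add β (hf a) ih.1, ih.2]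
    refine ⟨?_, rfl⟩
    simp [EReal.add_eq_bot_iff, hf a, ih.1]

lemma boltz_le_of_le (β : ℝ) (hβ : 0 < β) (c : ℝ) {t : EReal} (h : (c : EReal) ≤ t) :
    boltz β t ≤ Real.exp (-β * c) := by
  unfold boltz
  split_ifs with ht
  · exact (Real.exp_pos _).le
  · have : c ≤ t.toReal := by
      have := EReal.toReal_le_toReal h (EReal.coe_ne_bot c) ht
      simpa using this
    exact Real.exp_le_exp.2 (by nlinarith)

/-- Kirkwood–Salsburg-type recursion for the quotients
`θ_Λ^{(n+k)}(z;x,y)/θ_Λ^{(k)}(z;y)` (here `n = m + 1 ≥ 1`, `x₁ = x 0`,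
`(x₂,…,xₙ) = Fin.tail x`, and `θ_Λ^{(0)} := 1` corresponds to `k = 0` via the
empty tuple), with the series converging absolutely. -/
theorem statement17 {d : ℕ} (hd : 1 ≤ d) (β B : ℝ) (hβ : 0 < β) (hB : 0 ≤ B)
    (u : (Fin d → ℝ) → EReal) (hu : IsPairPotential u)
    (hstab : IsStable u B) (hreg : IsRegularPP β u)
    (Λ : Set (Fin d → ℝ)) (hΛb : IsBounded Λ) (hΛm : MeasurableSet Λ)
    (hXi : ∀ w : ℂ, ‖w‖ * (Real.exp (2 * β * B + 1) * Creg β u) < 1 →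
      Xi β u Λ w ≠ 0)
    (z : ℂ) (hz : ‖z‖ * (Real.exp (2 * β * B + 1) * Creg β u) < 1)
    (k : ℕ) (y : Fin k → (Fin d → ℝ)) (hy : ∀ j, y j ∈ Λ)
    (hθk : theta β u Λ k z y ≠ 0)
    (m : ℕ) (x : Fin (m + 1) → (Fin d → ℝ)) (hx : ∀ i, x i ∈ Λ) :
    Summable (fun l : ℕ =>
      ‖(1 / (Nat.factorial l : ℂ)) *
        ∫ w in cube Λ l,
          (∏ i, ((mayer β u (x 0 - w i) : ℝ) : ℂ)) *
            (theta β u Λ (m + k + l) z (Fin.append (Fin.append (Fin.tail x) y) w) /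
              theta β u Λ k z y)‖) ∧
    theta β u Λ (m + 1 + k) z (Fin.append x y) / theta β u Λ k z y =
      z * ((boltz β ((∑ i : Fin m, u (x 0 - Fin.tail x i)) +
          ∑ j : Fin k, u (x 0 - y j)) : ℝ) : ℂ) *
        ∑' l : ℕ, (1 / (Nat.factorial l : ℂ)) *
          ∫ w in cube Λ l,
            (∏ i, ((mayer β u (x 0 - w i) : ℝ) : ℂ)) *
              (theta β u Λ (m + k + l) z (Fin.append (Fin.append (Fin.tail x) y) w) /
                theta β u Λ k z y) := by
  obtain ⟨hum, heven, c, hc⟩ := hu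
  have hbot : ∀ a, u a ≠ ⊥ := fun a h => by
    have := hc a
    rw [h] at this
    exact EReal.coe_ne_bot c (le_bot_iff.1 this)
  set φ : (Fin d → ℝ) → (Fin d → ℝ) → ℝ := fun a b => boltz β (u (a - b)) with hφ
  have hs : ∀ a b, φ a b = φ b a := fun a b => by
    simp only [hφ]; rw [← heven (b - a), neg_sub]
  have h0 : ∀ a b, 0 ≤ φ a b := fun a b => boltz_nonneg _ _
  have hm : Measurable (fun p : (Fin d → ℝ) × (Fin d → ℝ) => φ p.1 p.2) :=
    (boltz_measurable β).comp (hum.comp (measurable_fst.sub measurable_snd))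
  have hHam : ∀ (n : ℕ) (v : Fin n → Fin d → ℝ), boltz β (Ham u n v) = KG φ (Fin n) v := by
    intro n v
    rw [KG_fin φ hs h0, Ham]
    exact (boltz_sum β _ _ fun p => hbot _).2
  set K : ℝ := Real.exp (β * B) with hKdef
  have hK : ∀ (n : ℕ) (v : Fin n → Fin d → ℝ), KG φ (Fin n) v ≤ K ^ n := by
    intro n v
    rw [← hHam]
    refine (boltz_le_of_le β hβ _ (hstab n v)).trans (le_of_eq ?_)
    rw [hKdef, ← Real.exp_nat_mul]
    congr 1
    ring
  have hfin : volume Λ < ⊤ := hΛb.measure_lt_top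
  set μ : Measure (Fin d → ℝ) := volume.restrict Λ with hμ
  have : IsFiniteMeasure μ := ⟨by simpa [hμ] using hfin⟩
  have hcube : ∀ l, (volume : Measure (Fin l → Fin d → ℝ)).restrict (cube Λ l) =
      Measure.pi fun _ : Fin l => μ := by
    intro l
    rw [cube, volume_pi, Measure.restrict_pi_pi]
  have hhint : Integrable (fun w => mayer β u (x 0 - w)) μ :=
    (Integrable.comp_sub_left hreg (x 0)).restrict
  have happ : ∀ (ι : Type) [Fintype ι] (n j : ℕ) (e : ι ≃ Fin n) (v : Fin n → Fin d → ℝ)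
      (w : Fin j → Fin d → ℝ), KG φ (Fin (n + j)) (Fin.append v w) =
        KG φ (ι ⊕ Fin j) (Sum.elim (v ∘ e) w) := by
    intro ι _ n j e v w
    rw [← KG_comp φ ((e.sumCongr (Equiv.refl _)).trans finSumFinEquiv)]
    congr 1
    funext s
    rcases s with s | s <;> simp
  have hθ : ∀ (ι : Type) [Fintype ι] (n : ℕ) (e : ι ≃ Fin n) (v : Fin n → Fin d → ℝ),
      theta β u Λ n z v = (Xi β u Λ z)⁻¹ * KS φ μ ι n z (v ∘ e) := by
    intro ι _ n e v
    unfold theta KS KJ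
    congr 1
    refine tsum_congr fun j => ?_
    rw [hcube]
    simp only [hHam, happ ι n j e v]
  set X : Fin m ⊕ Fin k → Fin d → ℝ := Sum.elim (Fin.tail x) y with hX
  set D : ℂ := (Xi β u Λ z)⁻¹ / theta β u Λ k z y with hD
  have hθ1 : ∀ (l : ℕ) (w : Fin l → Fin d → ℝ),
      theta β u Λ (m + k + l) z (Fin.append (Fin.append (Fin.tail x) y) w) / theta β u Λ k z y =
        D * KS φ μ ((Fin m ⊕ Fin k) ⊕ Fin l) (m + k + l) z (Sum.elim X w) := by
    intro l w
    rw [hθ ((Fin m ⊕ Fin k) ⊕ Fin l) (m + k + l)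
      ((finSumFinEquiv.sumCongr (Equiv.refl _)).trans finSumFinEquiv)]
    have : Fin.append (Fin.append (Fin.tail x) y) w ∘
        ((finSumFinEquiv.sumCongr (Equiv.refl _)).trans finSumFinEquiv) = Sum.elim X w := by
      funext s
      rcases s with (s | s) | s <;> simp [hX]
    rw [this, hD]
    ring
  obtain ⟨hsum, hmain⟩ := KS_main φ hm K hK μ (fun w => mayer β u (x 0 - w)) hhint X
    (Real.exp_pos _).le (m + k) z
  have hterm : ∀ l : ℕ, (1 / (Nat.factorial l : ℂ)) *
        ∫ w in cube Λ l,
          (∏ i, ((mayer β u (x 0 - w i) : ℝ) : ℂ)) *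
            (theta β u Λ (m + k + l) z (Fin.append (Fin.append (Fin.tail x) y) w) /
              theta β u Λ k z y) =
      D * ((1 / (Nat.factorial l : ℂ)) *
      ∫ w, (∏ i, ((mayer β u (x 0 - w i) : ℝ) : ℂ)) *
        KS φ μ ((Fin m ⊕ Fin k) ⊕ Fin l) (m + k + l) z (Sum.elim X w)
        ∂(Measure.pi fun _ : Fin l => μ)) := by
    intro l
    rw [hcube]
    simp only [hθ1, mul_left_comm _ D, integral_const_mul]
  simp only [hterm]
  constructor
  · simp only [norm_mul D]
    exact hsum.mul_left _
  rw [tsum_mul_left]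
  have hW : boltz β ((∑ i : Fin m, u (x 0 - Fin.tail x i)) + ∑ j : Fin k, u (x 0 - y j)) =
      ∏ a, φ (x 0) (X a) := by
    have h1 := boltz_sum β Finset.univ (fun i : Fin m => u (x 0 - Fin.tail x i)) fun _ => hbot _
    have h2 := boltz_sum β Finset.univ (fun j : Fin k => u (x 0 - y j)) fun _ => hbot _
    rw [boltz_add β h1.1 h2.1, h1.2, h2.2, Fintype.prod_sum_type]
    simp [hX, hφ]
  set P : ℝ := ∏ a, φ (x 0) (X a) with hP
  rw [hW]
  have hlhs : theta β u Λ (m + 1 + k) z (Fin.append x y) = (Xi β u Λ z)⁻¹ * ((P : ℂ) *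
      ∑' j : ℕ, z ^ (m + k + 1 + j) / (Nat.factorial j : ℂ) *
      ((∫ v, (∏ i, (1 + mayer β u (x 0 - v i))) * KG φ ((Fin m ⊕ Fin k) ⊕ Fin j) (Sum.elim X v)
        ∂(Measure.pi fun _ : Fin j => μ) : ℝ) : ℂ)) := by
    unfold theta
    congr 1
    rw [← tsum_mul_left]
    refine tsum_congr fun j => ?_
    rw [hcube]
    have hint : ∀ v : Fin j → Fin d → ℝ,
        boltz β (Ham u (m + 1 + k + j) (Fin.append (Fin.append x y) v)) =
        P * ((∏ i, (1 + mayer β u (x 0 - v i))) *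
          KG φ ((Fin m ⊕ Fin k) ⊕ Fin j) (Sum.elim X v)) := by
      intro v
      rw [hHam]
      let e : Option ((Fin m ⊕ Fin k) ⊕ Fin j) ≃ (Fin (m + 1) ⊕ Fin k) ⊕ Fin j :=
        { toFun := fun o => match o with
            | none => Sum.inl (Sum.inl 0)
            | some (Sum.inl (Sum.inl i)) => Sum.inl (Sum.inl i.succ)
            | some (Sum.inl (Sum.inr i)) => Sum.inl (Sum.inr i)
            | some (Sum.inr i) => Sum.inr i
          invFun := fun s => match s with
            | Sum.inl (Sum.inl i) =>
                Fin.cases none (fun i => some (Sum.inl (Sum.inl i))) i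
            | Sum.inl (Sum.inr i) => some (Sum.inl (Sum.inr i))
            | Sum.inr i => some (Sum.inr i)
          left_inv := by rintro (_ | (_ | _) | _) <;> rfl
          right_inv := by
            rintro ((i | _) | _)
            · refine Fin.cases ?_ (fun i => ?_) i <;> rfl
            · rfl
            · rfl }
      rw [happ (Fin (m + 1) ⊕ Fin k) (m + 1 + k) j finSumFinEquiv, ← KG_comp φ e,
        KG_option φ hs h0]
      have hn : (Sum.elim (Fin.append x y ∘ finSumFinEquiv) v ∘ e) none = x 0 := by
        simp [e]
      have hsm : ∀ i, (Sum.elim (Fin.append x y ∘ finSumFinEquiv) v ∘ e) (some i) =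
          Sum.elim X v i := by
        rintro ((i | i) | i) <;> simp [e, hX, Fin.tail]
      simp only [hn, hsm, Fintype.prod_sum_type (α₁ := Fin m ⊕ Fin k), Sum.elim_inl, Sum.elim_inr]
      rw [← hP]
      have : ∀ a, φ (x 0) a = 1 + mayer β u (x 0 - a) := fun a => by simp [hφ, mayer]
      simp only [this]
      ring
    simp only [hint, integral_const_mul]
    push_cast
    rw [show m + 1 + k + j = m + k + 1 + j by ring]
    ring
  rw [hlhs, hmain, hD]
  ring
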